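/- Pointwise 1-type Gauss map of the first kind is equivalent to flat normal bundle: in the setting of a minimal Lorentzian surface x(s,t) = α(s) + β(t) in null coordinates, for every point (s,t) the following are equivalent: (a) ∂²ν/∂s∂t (s,t) is a real scalar multiple of ν(s,t); (b) η₁(s,t) ∧ η₂(s,t) = 0 in Λ²(ℝ⁴). In particular, there exists a smooth function f with Δν = f·ν on all of I₁ × I₂ if and only if η₁ ∧ η₂ vanishes identically. -/

import Mathlib

noncomputable section

/-- The Minkowski bilinear form on `ℝ⁴ = Fin 4 → ℝ`:
`B(v,w) = -v₀w₀ + v₁w₁ + v₂w₂ + v₃w₃`. -/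
def B4 (v w : Fin 4 → ℝ) : ℝ :=
  -(v 0 * w 0) + v 1 * w 1 + v 2 * w 2 + v 3 * w 3

/-- The wedge product `v ∧ w`, modelled concretely as the antisymmetric array
`(i,j) ↦ vᵢwⱼ - vⱼwᵢ` (a faithful model of the second exterior power `Λ²(ℝ⁴)`). -/
def wedge (v w : Fin 4 → ℝ) : Fin 4 → Fin 4 → ℝ :=
  fun i j => v i * w j - v j * w i

/-- Partial derivative of a two-parameter map with respect to the first variable. -/
def pds {E : Type*} [NormedAddCommGroup E] [NormedSpace ℝ E]
    (x : ℝ → ℝ → E) (s t : ℝ) : E :=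
  deriv (fun u => x u t) s

/-- Partial derivative of a two-parameter map with respect to the second variable. -/
def pdt {E : Type*} [NormedAddCommGroup E] [NormedSpace ℝ E]
    (x : ℝ → ℝ → E) (s t : ℝ) : E :=
  deriv (fun u => x s u) t

/-- `m²(s,t) = -B(α'(s), β'(t))`, the conformal factor of the induced metric
`-m²(ds⊗dt + dt⊗ds)` of the minimal Lorentzian surface `x(s,t) = α(s) + β(t)`. -/
def msq (α β : ℝ → Fin 4 → ℝ) (s t : ℝ) : ℝ :=
  -B4 (deriv α s) (deriv β t)

/-- `η₁ = h(∂s,∂s)`: the component of `x_{ss} = α''` orthogonal to the tangent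
plane `span{α'(s), β'(t)}`. -/
def eta1 (α β : ℝ → Fin 4 → ℝ) (s t : ℝ) : Fin 4 → ℝ :=
  deriv (deriv α) s
    - (B4 (deriv (deriv α) s) (deriv β t) / B4 (deriv α s) (deriv β t)) • deriv α s

/-- `η₂ = h(∂t,∂t)`: the component of `x_{tt} = β''` orthogonal to the tangent
plane `span{α'(s), β'(t)}`. -/
def eta2 (α β : ℝ → Fin 4 → ℝ) (s t : ℝ) : Fin 4 → ℝ :=
  deriv (deriv β) t
    - (B4 (deriv (deriv β) t) (deriv α s) / B4 (deriv α s) (deriv β t)) • deriv β t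

/-- The Gauss map `ν = (1/m²)·(α'(s) ∧ β'(t))`, valued in (a model of) `Λ²(ℝ⁴)`. -/
def gaussMap (α β : ℝ → Fin 4 → ℝ) (s t : ℝ) : Fin 4 → Fin 4 → ℝ :=
  (1 / msq α β s t) • wedge (deriv α s) (deriv β t)

/-- The Laplace–Beltrami operator of the induced metric `-m²(ds⊗dt + dt⊗ds)`
(with the sign convention of the paper) acting on `Λ²(ℝ⁴)`-valued maps:
`Δξ = (2/m²)·∂²ξ/∂s∂t`. -/
def lap (α β : ℝ → Fin 4 → ℝ) (ξ : ℝ → ℝ → (Fin 4 → Fin 4 → ℝ)) (s t : ℝ) :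
    Fin 4 → Fin 4 → ℝ :=
  (2 / msq α β s t) • pds (pdt ξ) s t

/-!
Write `a = α'`, `b = β'`, `D = B(a, b) = -m²`. The quotient rule gives
`(φ(c)⁻¹ L(c))' = φ(c)⁻¹ L(c' - (φ(c')/φ(c)) c)` for linear `φ` and `L`: dividing by `φ(c)`
projects the velocity of `c` onto `ker φ`. For `φ = B(a, ·)` and `φ = B(·, b)` these projections
turn `b'` and `a'` into `η₂` and `η₁`, so differentiating `ν = -D⁻¹ a ∧ b` in `t` and then in `s`
gives `∂²ν/∂s∂t = m⁻² η₁ ∧ η₂ + (B(η₁, η₂)/m²) ν`.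

Hence `∂²ν/∂s∂t` is a multiple of `ν` iff `η₁ ∧ η₂` is a multiple of `a ∧ b`. The 2-form
`B(a, ·) ∧ B(·, b)` vanishes on `η₁ ∧ η₂` but not on `a ∧ b`, so that multiple must be zero, and
then `Δν = f ν` with `f = 2 B(η₁, η₂)/m⁴`.
-/

open Filter Topology Set

section KerProj

variable {𝕜 E G F X : Type*} [NontriviallyNormedField 𝕜]
  [NormedAddCommGroup E] [NormedSpace 𝕜 E] [NormedAddCommGroup G] [NormedSpace 𝕜 G]
  [NormedAddCommGroup F] [NormedSpace 𝕜 F] [NormedAddCommGroup X] [NormedSpace 𝕜 X]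

/-- The projection of `v` onto the hyperplane `ker φ` along the line spanned by `c`. It is a
projection only when `φ c ≠ 0`; otherwise it is the identity, as `φ v / 0 = 0`. For
`φ = B(·, β')` and `c = α'` it sends `α''` to `η₁`. -/
def kerProj (φ : E →L[𝕜] 𝕜) (c v : E) : E :=
  v - (φ v / φ c) • c

theorem apply_kerProj {φ : E →L[𝕜] 𝕜} {c : E} (hc : φ c ≠ 0) (v : E) :
    φ (kerProj φ c v) = 0 := by
  simp only [kerProj, map_sub, map_smul, smul_eq_mul, div_mul_cancel₀ _ hc, sub_self]

theorem apply_kerProj_of_apply_eq_zero (φ : E →L[𝕜] 𝕜) {L : E →L[𝕜] F} {c v : E}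
    (hc : L c = 0) (hv : L v = 0) : L (kerProj φ c v) = 0 := by
  simp only [kerProj, map_sub, map_smul, hc, hv, smul_zero, sub_zero]

theorem hasDerivAt_inv_smul {φ : E →L[𝕜] 𝕜} (L : E →L[𝕜] F) {c : 𝕜 → E} {v : E} {t : 𝕜}
    (hc : HasDerivAt c v t) (hφ : φ (c t) ≠ 0) :
    HasDerivAt (fun u => (φ (c u))⁻¹ • L (c u)) ((φ (c t))⁻¹ • L (kerProj φ (c t) v)) t := by
  have hφc : HasDerivAt (fun u => φ (c u)) (φ v) t := φ.hasFDerivAt.comp_hasDerivAt t hc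
  have hLc : HasDerivAt (fun u => L (c u)) (L v) t := L.hasFDerivAt.comp_hasDerivAt t hc
  refine ((hφc.inv hφ).smul hLc).congr_deriv ?_
  simp only [kerProj, map_sub, map_smul, Pi.inv_apply]
  match_scalars <;> field_simp

theorem hasDerivAt_inv_smul_kerProj (B : E →L[𝕜] G →L[𝕜] 𝕜) (W : E →L[𝕜] G →L[𝕜] F)
    {a : 𝕜 → E} {p : E} {s : 𝕜} (ha : HasDerivAt a p s) (b q : G) (hab : B (a s) b ≠ 0) :
    HasDerivAt (fun u => (B (a u) b)⁻¹ • W (a u) (kerProj (B (a u)) b q))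
      ((B (a s) b)⁻¹ • W (kerProj (B.flip b) (a s) p) (kerProj (B (a s)) b q) -
        ((B (a s) b)⁻¹ * B (kerProj (B.flip b) (a s) p) (kerProj (B (a s)) b q)) •
          (B (a s) b)⁻¹ • W (a s) b) s := by
  -- The function is `D⁻¹ W(a, q) - (D⁻¹ B(a, q)) D⁻¹ W(a, b)` with `D = B(a, b)`: each factor is a
  -- linear image of `a` divided by `D`.
  have hflip : B.flip b (a s) ≠ 0 := hab
  have hWq := hasDerivAt_inv_smul (W.flip q) ha hflip
  have hWb := hasDerivAt_inv_smul (W.flip b) ha hflip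
  have hBq := hasDerivAt_inv_smul (B.flip q) ha hflip
  have hη : B (kerProj (B.flip b) (a s) p) b = 0 := apply_kerProj hflip p
  refine ((hWq.sub (hBq.smul hWb)).congr_of_eventuallyEq (.of_forall fun u => ?_)).congr_deriv ?_
  · simp only [kerProj, map_sub, map_smul, Pi.sub_apply, Pi.smul_apply', B.flip_apply,
      W.flip_apply, smul_eq_mul]
    module
  · generalize kerProj (B.flip b) (a s) p = η at hη ⊢
    simp only [kerProj, map_sub, map_smul, hη, B.flip_apply, W.flip_apply, smul_eq_mul]
    module

theorem contDiffOn_kerProj {n : WithTop ℕ∞} {S : Set X} {φ : X → E →L[𝕜] 𝕜} {c v : X → E}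
    (hφ : ContDiffOn 𝕜 n φ S) (hc : ContDiffOn 𝕜 n c S) (hv : ContDiffOn 𝕜 n v S)
    (hφc : ∀ x ∈ S, φ x (c x) ≠ 0) :
    ContDiffOn 𝕜 n (fun x => kerProj (φ x) (c x) (v x)) S :=
  hv.sub (((hφ.clm_apply hv).div (hφ.clm_apply hc) hφc).smul hc)

end KerProj

section GaussMap

variable {E G F : Type*} [NormedAddCommGroup E] [NormedSpace ℝ E] [NormedAddCommGroup G]
  [NormedSpace ℝ G] [NormedAddCommGroup F] [NormedSpace ℝ F]

/-- The Gauss map `ν = (1/m²)·(a ∧ b)` with `m² = -B(a, b)`, for an arbitrary bilinear form `B` and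
an arbitrary bilinear product `W` in place of the wedge. The curves `a` and `b` are the velocities
`α'` and `β'`. -/
def bilinGaussMap (B : E →L[ℝ] G →L[ℝ] ℝ) (W : E →L[ℝ] G →L[ℝ] F) (a : ℝ → E) (b : ℝ → G)
    (s t : ℝ) : F :=
  (1 / -B (a s) (b t)) • W (a s) (b t)

/-- The vector `η₁`: the projection of `a' = α''` along `a` to the vectors `B`-orthogonal to `b`.
When `a` is null, it is the component of `α''` normal to the tangent plane. -/
def bilinEta1 (B : E →L[ℝ] G →L[ℝ] ℝ) (a : ℝ → E) (b : ℝ → G) (s t : ℝ) : E :=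
  kerProj (B.flip (b t)) (a s) (deriv a s)

/-- The vector `η₂`: the projection of `b' = β''` along `b` to the vectors `B`-orthogonal to `a`.
When `b` is null, it is the component of `β''` normal to the tangent plane. -/
def bilinEta2 (B : E →L[ℝ] G →L[ℝ] ℝ) (a : ℝ → E) (b : ℝ → G) (s t : ℝ) : G :=
  kerProj (B (a s)) (b t) (deriv b t)

/-- The function `f` with `Δν = f ν` when `η₁ ∧ η₂` vanishes. It is `-2K`, where
`K = -B(η₁, η₂)/m⁴` is the Gaussian curvature of the surface when `a` and `b` are null. -/
def gaussMapFactor (B : E →L[ℝ] G →L[ℝ] ℝ) (a : ℝ → E) (b : ℝ → G) (s t : ℝ) : ℝ :=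
  2 * B (bilinEta1 B a b s t) (bilinEta2 B a b s t) / B (a s) (b t) ^ 2

variable {B : E →L[ℝ] G →L[ℝ] ℝ} {a : ℝ → E} {b : ℝ → G} {s t : ℝ}

theorem apply_bilinEta2_left (hab : B (a s) (b t) ≠ 0) : B (a s) (bilinEta2 B a b s t) = 0 :=
  apply_kerProj hab _

theorem bilinGaussMap_eq_neg (B : E →L[ℝ] G →L[ℝ] ℝ) (W : E →L[ℝ] G →L[ℝ] F) (a : ℝ → E)
    (b : ℝ → G) (s t : ℝ) :
    bilinGaussMap B W a b s t = -((B (a s) (b t))⁻¹ • W (a s) (b t)) := by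
  rw [bilinGaussMap, one_div, inv_neg, neg_smul]

theorem pdt_bilinGaussMap (W : E →L[ℝ] G →L[ℝ] F) (hb : DifferentiableAt ℝ b t)
    (hab : B (a s) (b t) ≠ 0) :
    pdt (bilinGaussMap B W a b) s t =
      -((B (a s) (b t))⁻¹ • W (a s) (bilinEta2 B a b s t)) := by
  simp only [pdt, bilinGaussMap_eq_neg]
  exact (hasDerivAt_inv_smul (W (a s)) hb.hasDerivAt hab).neg.deriv

theorem pds_pdt_bilinGaussMap (W : E →L[ℝ] G →L[ℝ] F) (ha : DifferentiableAt ℝ a s)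
    (hb : DifferentiableAt ℝ b t) (hab : B (a s) (b t) ≠ 0) :
    pds (pdt (bilinGaussMap B W a b)) s t =
      (1 / -B (a s) (b t)) • W (bilinEta1 B a b s t) (bilinEta2 B a b s t) +
        (B (bilinEta1 B a b s t) (bilinEta2 B a b s t) / -B (a s) (b t)) •
          bilinGaussMap B W a b s t := by
  have hnear : ∀ᶠ u in 𝓝 s, B (a u) (b t) ≠ 0 :=
    ((B.flip (b t)).continuous.continuousAt.comp ha.continuousAt).eventually_ne hab
  have hpdt : (fun u => pdt (bilinGaussMap B W a b) u t) =ᶠ[𝓝 s]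
      fun u => -((B (a u) (b t))⁻¹ • W (a u) (kerProj (B (a u)) (b t) (deriv b t))) :=
    hnear.mono fun _ hu => pdt_bilinGaussMap W hb hu
  have hderiv := (hasDerivAt_inv_smul_kerProj B W ha.hasDerivAt (b t) (deriv b t) hab).neg
  rw [pds, (hderiv.congr_of_eventuallyEq hpdt).deriv, bilinGaussMap_eq_neg, bilinEta1, bilinEta2]
  module

theorem contDiffOn_gaussMapFactor {n : WithTop ℕ∞} {I₁ I₂ : Set ℝ} (hI₁ : IsOpen I₁)
    (hI₂ : IsOpen I₂) (ha : ContDiffOn ℝ (n + 1) a I₁) (hb : ContDiffOn ℝ (n + 1) b I₂)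
    (hab : ∀ s ∈ I₁, ∀ t ∈ I₂, B (a s) (b t) ≠ 0) :
    ContDiffOn ℝ n (Function.uncurry (gaussMapFactor B a b)) (I₁ ×ˢ I₂) := by
  have hfst : MapsTo Prod.fst (I₁ ×ˢ I₂) I₁ := fun _ hx => hx.1
  have hsnd : MapsTo Prod.snd (I₁ ×ˢ I₂) I₂ := fun _ hx => hx.2
  have ha₀ := (ha.of_le le_self_add).comp contDiffOn_fst hfst
  have hb₀ := (hb.of_le le_self_add).comp contDiffOn_snd hsnd
  have ha₁ := (ha.deriv_of_isOpen hI₁ le_rfl).comp contDiffOn_fst hfst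
  have hb₁ := (hb.deriv_of_isOpen hI₂ le_rfl).comp contDiffOn_snd hsnd
  have hη₁ := contDiffOn_kerProj (B.flip.contDiff.comp_contDiffOn hb₀) ha₀ ha₁
    fun x hx => hab x.1 hx.1 x.2 hx.2
  have hη₂ := contDiffOn_kerProj (B.contDiff.comp_contDiffOn ha₀) hb₀ hb₁
    fun x hx => hab x.1 hx.1 x.2 hx.2
  exact (contDiffOn_const.mul ((B.contDiff.comp_contDiffOn hη₁).clm_apply hη₂)).div
    (((B.contDiff.comp_contDiffOn ha₀).clm_apply hb₀).pow 2)
    fun x hx => pow_ne_zero 2 (hab x.1 hx.1 x.2 hx.2)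

end GaussMap

theorem exists_smul_add_smul_eq_smul_iff {K M : Type*} [Field K] [AddCommGroup M] [Module K M]
    {x y : M} {m : K} (hm : m ≠ 0) (r : K) :
    (∃ k : K, m • x + r • m • y = k • m • y) ↔ ∃ k : K, x = k • y := by
  constructor
  · rintro ⟨k, hk⟩
    refine ⟨k - r, smul_right_injective M hm ?_⟩
    simp only [eq_sub_of_add_eq hk]
    module
  · rintro ⟨k, rfl⟩
    exact ⟨k + r, by module⟩

section TwoForms

variable {E F : Type*} [NormedAddCommGroup E] [NormedSpace ℝ E] [NormedAddCommGroup F]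
  [NormedSpace ℝ F]

/-- Every decomposable 2-form `φ ∧ ψ` factors through the bilinear product `W`, as it does through
the wedge product in any model of `Λ²`. The product `W` itself need not be alternating. -/
def DetectsTwoForms (W : E →L[ℝ] E →L[ℝ] F) : Prop :=
  ∀ φ ψ : E →L[ℝ] ℝ, ∃ L : F →ₗ[ℝ] ℝ, ∀ v w, L (W v w) = φ v * ψ w - φ w * ψ v

theorem DetectsTwoForms.exists_eq_smul_iff {W : E →L[ℝ] E →L[ℝ] F} (hW : DetectsTwoForms W)
    {φ ψ : E →L[ℝ] ℝ} {v w p q : E} (hpq : φ p * ψ q - φ q * ψ p = 0)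
    (hvw : φ v * ψ w - φ w * ψ v ≠ 0) : (∃ k : ℝ, W p q = k • W v w) ↔ W p q = 0 := by
  refine ⟨fun ⟨k, hk⟩ => ?_, fun h => ⟨0, by rw [h, zero_smul]⟩⟩
  obtain ⟨L, hL⟩ := hW φ ψ
  have hk₀ : k * (φ v * ψ w - φ w * ψ v) = 0 := by
    rw [← hL, ← smul_eq_mul, ← map_smul, ← hk, hL, hpq]
  rw [hk, (mul_eq_zero.mp hk₀).resolve_right hvw, zero_smul]

variable {B : E →L[ℝ] E →L[ℝ] ℝ} {W : E →L[ℝ] E →L[ℝ] F} {a b : ℝ → E}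

theorem apply_deriv_eq_zero_of_null (hB : ∀ v w, B v w = B w v) {c : ℝ → E} {t : ℝ}
    (hc : DifferentiableAt ℝ c t) (hnull : ∀ᶠ u in 𝓝 t, B (c u) (c u) = 0) :
    B (c t) (deriv c t) = 0 := by
  have hprod : HasDerivAt (fun u => B (c u) (c u)) (B (c t) (deriv c t) + B (deriv c t) (c t)) t :=
    B.hasDerivAt_of_bilinear (fun _ => hc.hasDerivAt) (fun _ => hc.hasDerivAt)
  have hzero : HasDerivAt (fun u => B (c u) (c u)) 0 t :=
    (hasDerivAt_const t 0).congr_of_eventuallyEq hnull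
  linarith [hprod.unique hzero, hB (deriv c t) (c t)]

theorem exists_pds_pdt_bilinGaussMap_eq_smul_iff (hB : ∀ v w, B v w = B w v)
    (hW : DetectsTwoForms W) {s t : ℝ} (ha : DifferentiableAt ℝ a s) (hb : DifferentiableAt ℝ b t)
    (hab : B (a s) (b t) ≠ 0)
    (hnull : (∀ᶠ u in 𝓝 s, B (a u) (a u) = 0) ∨ ∀ᶠ u in 𝓝 t, B (b u) (b u) = 0) :
    (∃ k : ℝ, pds (pdt (bilinGaussMap B W a b)) s t = k • bilinGaussMap B W a b s t) ↔
      W (bilinEta1 B a b s t) (bilinEta2 B a b s t) = 0 := by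
  have hη : B (a s) (bilinEta1 B a b s t) * B (bilinEta2 B a b s t) (b t) = 0 :=
    mul_eq_zero.mpr <| hnull.imp
      (fun h => apply_kerProj_of_apply_eq_zero _ h.self_of_nhds
        (apply_deriv_eq_zero_of_null hB ha h))
      (fun h => apply_kerProj_of_apply_eq_zero _ (L := B.flip (b t)) h.self_of_nhds
        ((hB _ _).trans (apply_deriv_eq_zero_of_null hB hb h)))
  have hdiag : B (a s) (a s) * B (b t) (b t) = 0 :=
    mul_eq_zero.mpr (hnull.imp (·.self_of_nhds) (·.self_of_nhds))
  rw [pds_pdt_bilinGaussMap W ha hb hab, bilinGaussMap,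
    exists_smul_add_smul_eq_smul_iff (one_div_ne_zero (neg_ne_zero.mpr hab))]
  refine hW.exists_eq_smul_iff (φ := B (a s)) (ψ := B.flip (b t)) ?_ ?_
  · simp only [B.flip_apply, hη, apply_bilinEta2_left hab, zero_mul, sub_zero]
  · simpa only [B.flip_apply, hdiag, zero_sub, neg_ne_zero] using mul_ne_zero hab hab

theorem pointwise_one_type_first_kind_iff_flat_normal_bundle_general {n : WithTop ℕ∞}
    (hB : ∀ v w, B v w = B w v) (hW : DetectsTwoForms W) {I₁ I₂ : Set ℝ} (hI₁ : IsOpen I₁)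
    (hI₂ : IsOpen I₂) (ha : ContDiffOn ℝ (n + 1) a I₁) (hb : ContDiffOn ℝ (n + 1) b I₂)
    (hnull : (∀ s ∈ I₁, B (a s) (a s) = 0) ∨ ∀ t ∈ I₂, B (b t) (b t) = 0)
    (hab : ∀ s ∈ I₁, ∀ t ∈ I₂, B (a s) (b t) ≠ 0) :
    (∀ s ∈ I₁, ∀ t ∈ I₂,
      ((∃ k : ℝ, pds (pdt (bilinGaussMap B W a b)) s t = k • bilinGaussMap B W a b s t) ↔
        W (bilinEta1 B a b s t) (bilinEta2 B a b s t) = 0)) ∧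
    ((∃ f : ℝ → ℝ → ℝ, ContDiffOn ℝ n (Function.uncurry f) (I₁ ×ˢ I₂) ∧
        ∀ s ∈ I₁, ∀ t ∈ I₂, (2 / -B (a s) (b t)) • pds (pdt (bilinGaussMap B W a b)) s t =
          f s t • bilinGaussMap B W a b s t) ↔
      ∀ s ∈ I₁, ∀ t ∈ I₂, W (bilinEta1 B a b s t) (bilinEta2 B a b s t) = 0) := by
  have hda : ∀ s ∈ I₁, DifferentiableAt ℝ a s := fun s hs =>
    (ha.differentiableOn (by simp)).differentiableAt (hI₁.mem_nhds hs)
  have hdb : ∀ t ∈ I₂, DifferentiableAt ℝ b t := fun t ht =>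
    (hb.differentiableOn (by simp)).differentiableAt (hI₂.mem_nhds ht)
  have hpt : ∀ s ∈ I₁, ∀ t ∈ I₂,
      ((∃ k : ℝ, pds (pdt (bilinGaussMap B W a b)) s t = k • bilinGaussMap B W a b s t) ↔
        W (bilinEta1 B a b s t) (bilinEta2 B a b s t) = 0) := fun s hs t ht =>
    exists_pds_pdt_bilinGaussMap_eq_smul_iff hB hW (hda s hs) (hdb t ht) (hab s hs t ht) <|
      hnull.imp (eventually_of_mem (hI₁.mem_nhds hs)) (eventually_of_mem (hI₂.mem_nhds ht))
  refine ⟨hpt, fun ⟨f, _, hf⟩ s hs t ht => (hpt s hs t ht).mp ?_, fun h => ?_⟩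
  · have hm : 2 / -B (a s) (b t) ≠ 0 := div_ne_zero two_ne_zero (neg_ne_zero.mpr (hab s hs t ht))
    exact ⟨(2 / -B (a s) (b t))⁻¹ * f s t, by
      rw [mul_smul, ← hf s hs t ht, inv_smul_smul₀ hm]⟩
  · refine ⟨gaussMapFactor B a b, contDiffOn_gaussMapFactor hI₁ hI₂ ha hb hab, fun s hs t ht => ?_⟩
    rw [pds_pdt_bilinGaussMap W (hda s hs) (hdb t ht) (hab s hs t ht), h s hs t ht, smul_zero,
      zero_add, smul_smul, div_mul_div_comm, neg_mul_neg, ← sq, gaussMapFactor]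

end TwoForms

section Minkowski

theorem B4_comm (v w : Fin 4 → ℝ) : B4 v w = B4 w v := by
  simp only [B4, mul_comm]

theorem isBilinearMap_B4 : IsBilinearMap ℝ B4 := by
  constructor <;> intros <;> simp only [B4, Pi.add_apply, Pi.smul_apply, smul_eq_mul] <;> ring

theorem isBilinearMap_wedge : IsBilinearMap ℝ wedge := by
  constructor <;> intros <;> ext i j <;>
    simp only [wedge, Pi.add_apply, Pi.smul_apply, smul_eq_mul] <;> ring

theorem detectsTwoForms_wedge : DetectsTwoForms isBilinearMap_wedge.toContinuousBilinearMap := by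
  intro φ ψ
  refine ⟨φ.toLinearMap ∘ₗ ψ.toLinearMap.compLeft (Fin 4), fun v w => ?_⟩
  have hrow (i : Fin 4) : wedge v w i = v i • w - w i • v := by
    ext j
    simp only [wedge, Pi.sub_apply, Pi.smul_apply, smul_eq_mul, mul_comm]
  have hψ : (fun i => ψ (wedge v w i)) = ψ w • v - ψ v • w := by
    ext i
    simp only [hrow, map_sub, map_smul, Pi.sub_apply, Pi.smul_apply, smul_eq_mul, mul_comm]
  change φ (fun i => ψ (wedge v w i)) = _
  rw [hψ, map_sub, map_smul, map_smul, smul_eq_mul, smul_eq_mul]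
  ring

theorem eta2_eq_bilinEta2 (α β : ℝ → Fin 4 → ℝ) :
    eta2 α β = bilinEta2 isBilinearMap_B4.toContinuousBilinearMap (deriv α) (deriv β) := by
  ext1 s
  ext1 t
  rw [eta2, B4_comm]
  rfl

end Minkowski

/-- Pointwise 1-type Gauss map of the first kind is equivalent to flat normal
bundle: at each point, `∂²ν/∂s∂t` is a scalar multiple of `ν` iff `η₁ ∧ η₂ = 0`;
globally, `Δν = f·ν` for some smooth `f` iff `η₁ ∧ η₂` vanishes identically. -/
theorem pointwise_one_type_first_kind_iff_flat_normal_bundle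
    (I₁ I₂ : Set ℝ) (hI₁ : IsOpen I₁) (hI₂ : IsOpen I₂)
    (hI₁' : I₁.OrdConnected) (hI₂' : I₂.OrdConnected)
    (α β : ℝ → Fin 4 → ℝ)
    (hα : ContDiffOn ℝ (⊤ : ℕ∞) α I₁) (hβ : ContDiffOn ℝ (⊤ : ℕ∞) β I₂)
    (hαnull : ∀ s ∈ I₁, B4 (deriv α s) (deriv α s) = 0)
    (hβnull : ∀ t ∈ I₂, B4 (deriv β t) (deriv β t) = 0)
    (hneg : ∀ s ∈ I₁, ∀ t ∈ I₂, B4 (deriv α s) (deriv β t) < 0)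
    :
    (∀ s ∈ I₁, ∀ t ∈ I₂,
      ((∃ c : ℝ, pds (pdt (gaussMap α β)) s t = c • gaussMap α β s t) ↔
        wedge (eta1 α β s t) (eta2 α β s t) = 0)) ∧
    ((∃ f : ℝ → ℝ → ℝ, ContDiffOn ℝ (⊤ : ℕ∞) (Function.uncurry f) (I₁ ×ˢ I₂) ∧
        ∀ s ∈ I₁, ∀ t ∈ I₂, lap α β (gaussMap α β) s t = f s t • gaussMap α β s t) ↔
      (∀ s ∈ I₁, ∀ t ∈ I₂, wedge (eta1 α β s t) (eta2 α β s t) = 0)) := by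
  rw [eta2_eq_bilinEta2]
  exact pointwise_one_type_first_kind_iff_flat_normal_bundle_general
    (B := isBilinearMap_B4.toContinuousBilinearMap) B4_comm detectsTwoForms_wedge hI₁ hI₂
    (hα.deriv_of_isOpen hI₁ (by simp)) (hβ.deriv_of_isOpen hI₂ (by simp))
    (.inl hαnull) fun s hs t ht => (hneg s hs t ht).ne
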